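/- arXiv:2007.06961 — 4 statements merged into one kernel-verified Lean document; each statement's English description precedes it below -/
import Mathlib

section
/- Let X be a real inner product space, A : X → X a continuous linear self-adjoint positive semidefinite map, E : X → ℝ Fréchet differentiable, and let 0 < τ ≤ τ₀ be such that the functional x ↦ E(x) + (1/(2√(τ₀ τ))) ⟨A x, x⟩ is convex on X. Then for all x, y ∈ X: ⟨E'(x), x − y⟩ + (1/τ) ⟨A(x − y), x − y⟩ ≥ E(x) − E(y) + (1 − √(τ/τ₀)) (1/τ) ⟨A(x − y), x − y⟩. -/
open scoped RealInnerProductSpace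

/-!
A differentiable convex function lies above its tangents. Applied to `E + c ⟨A ·, ·⟩` with
`c = 1 / (2 √(τ₀ τ))`, and after expanding the quadratic form around `x`, this gives
`E' x (x - y) ≥ E x - E y - c ⟨A (x - y), x - y⟩` (`tangent_bound`). The claim follows because
`√(τ / τ₀) / τ = 1 / √(τ₀ τ) = 2 c` and `⟨A (x - y), x - y⟩ ≥ 0`.
-/

/-- The tangent inequality for a functional which becomes convex after adding a multiple `c` of
the quadratic form of a symmetric operator. -/
lemma tangent_bound {X : Type*} [NormedAddCommGroup X] [InnerProductSpace ℝ X]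
    (A : X →L[ℝ] X) (hA_sym : ∀ x y : X, ⟪A x, y⟫ = ⟪x, A y⟫)
    (E : X → ℝ) (E' : X → X →L[ℝ] ℝ) (hE : ∀ x : X, HasFDerivAt E (E' x) x) (c : ℝ)
    (hconv : ConvexOn ℝ (Set.univ : Set X) (fun x => E x + c * ⟪A x, x⟫)) (x y : X) :
    E x - E y - c * ⟪A (x - y), x - y⟫ ≤ E' x (x - y) := by
  -- Restrict to the line through `x` and `y` and compare the derivative at `0` with the slope.
  have hline := hconv.comp_affineMap (AffineMap.lineMap x y : ℝ →ᵃ[ℝ] X)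
  have hγ : HasDerivAt (AffineMap.lineMap x y : ℝ → X) (y - x) 0 :=
    AffineMap.hasDerivAt_lineMap
  have hEγ : HasDerivAt (fun t : ℝ => E (AffineMap.lineMap x y t)) (E' x (y - x)) 0 := by
    refine HasFDerivAt.comp_hasDerivAt (0 : ℝ) ?_ hγ
    simpa using hE x
  have hQγ := (A.hasFDerivAt.comp_hasDerivAt (0 : ℝ) hγ).inner ℝ hγ
  have h := hline.le_slope_of_hasDerivAt (x := 0) (y := 1) (by simp) (by simp) one_pos
    (hEγ.add (hQγ.const_mul c))
  have hs : ⟪A y, x⟫ = ⟪A x, y⟫ := by rw [hA_sym, real_inner_comm]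
  simp only [slope_def_field, Function.comp_apply, AffineMap.lineMap_apply_zero,
    AffineMap.lineMap_apply_one, map_sub, inner_sub_left, inner_sub_right, hs] at h ⊢
  linarith

/-- The abstract semiconvexity estimate (4.7) in the proof of Proposition 4.1:
if `x ↦ E(x) + (1/(2√(τ₀τ))) ⟨Ax, x⟩` is convex, then for all `x, y`
`⟨E'(x), x−y⟩ + (1/τ)⟨A(x−y), x−y⟩ ≥ E(x) − E(y) + (1 − √(τ/τ₀))(1/τ)⟨A(x−y), x−y⟩`. -/
theorem stmt_5 {X : Type*} [NormedAddCommGroup X] [InnerProductSpace ℝ X]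
    (A : X →L[ℝ] X)
    (hA_sym : ∀ x y : X, ⟪A x, y⟫ = ⟪x, A y⟫)
    (hA_psd : ∀ x : X, 0 ≤ ⟪A x, x⟫)
    (E : X → ℝ) (E' : X → X →L[ℝ] ℝ)
    (hE : ∀ x : X, HasFDerivAt E (E' x) x)
    (τ τ₀ : ℝ) (hτ : 0 < τ) (hττ₀ : τ ≤ τ₀)
    (hconv : ConvexOn ℝ (Set.univ : Set X)
      (fun x => E x + (1/(2 * Real.sqrt (τ₀ * τ))) * ⟪A x, x⟫)) :
    ∀ x y : X,
      E' x (x - y) + (1/τ) * ⟪A (x - y), x - y⟫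
        ≥ E x - E y + (1 - Real.sqrt (τ/τ₀)) * ((1/τ) * ⟪A (x - y), x - y⟫) := by
  intro x y
  have h := tangent_bound A hA_sym E E' hE _ hconv x y
  have hτ₀ : 0 < τ₀ := hτ.trans_le hττ₀
  have hc : Real.sqrt (τ/τ₀) * (1/τ) = 2 * (1/(2 * Real.sqrt (τ₀ * τ))) := by
    rw [Real.sqrt_div hτ.le, Real.sqrt_mul hτ₀.le]
    have h1 := Real.sqrt_pos.2 hτ
    have h2 := Real.sqrt_pos.2 hτ₀
    field_simp
    exact Real.sq_sqrt hτ.le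
  have hcQ : 0 ≤ 1/(2 * Real.sqrt (τ₀ * τ)) * ⟪A (x - y), x - y⟫ :=
    mul_nonneg (by positivity) (hA_psd _)
  have hQ : Real.sqrt (τ/τ₀) * ((1/τ) * ⟪A (x - y), x - y⟫)
      = 2 * (1/(2 * Real.sqrt (τ₀ * τ)) * ⟪A (x - y), x - y⟫) := by
    rw [← mul_assoc, hc, mul_assoc]
  linarith
end

section
/- Let ε be a real number with 0 < ε² < 3 and define γ(α) = (ε² + α²)/2. Then for every K > 0, the function (e, α) ↦ ½ γ(α) e² + ½ K α² is not convex on ℝ × [0,1]. -/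
/-!
With `α` near `1` and `e` large, the mixed derivative `α e` beats the product of the pure second
derivatives `(ε² + α²)/2` and `e²/2 + K`, because `ε² < 3`. Concretely, for a midpoint `(x, a)` and
an increment `(h s, h)`, the second difference of the function is
`h²/2 * ((ε² + a² + h²) s² + 4 a s x + x² + 2 K)`. Put `B = ε² + a² + h²`. Taking `x = B L` and
`s = -2 a L`, which minimises the quadratic form in `s`, turns the bracket into
`L² B (B - 4 a²) + 2 K`. For `a = 1 - h` and `h = (3 - ε²)/6` one has `4 a² - B = 2 h²`, so the
bracket is negative as soon as `L² B h² > K`, and convexity fails at the midpoint.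
-/


/-- Remark 3.3 (insufficiency of viscosity in damage), for `d = 1`, `C₁ = 1`,
and the Ambrosio–Tortorelli-type degradation `γ(α) = (ε² + α²)/2` with
`0 < ε² < 3`: for every `K > 0`, the function
`(e, α) ↦ ½ γ(α) e² + ½ K α²` is not convex on `ℝ × [0,1]`. -/
theorem stmt_8 (ε : ℝ) (hε : 0 < ε ^ 2) (hε3 : ε ^ 2 < 3) :
    ∀ K : ℝ, 0 < K →
      ¬ ConvexOn ℝ ((Set.univ : Set ℝ) ×ˢ Set.Icc (0:ℝ) 1)
        (fun p : ℝ × ℝ =>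
          (1/2) * ((ε ^ 2 + p.2 ^ 2) / 2) * p.1 ^ 2 + (1/2) * K * p.2 ^ 2) := by
  intro K hK hconv
  -- Chosen so that `3 * (1 - h) ^ 2 - ε ^ 2 - h ^ 2 = 2 * h ^ 2`; also `0 < h < 1/2`.
  obtain ⟨h, hh⟩ : ∃ h : ℝ, h = (3 - ε ^ 2) / 6 := ⟨_, rfl⟩
  have h0 : 0 < h := by rw [hh]; linarith
  have h1 : h < 1 / 2 := by rw [hh]; linarith
  have he : ε ^ 2 = 3 - 6 * h := by rw [hh]; ring
  obtain ⟨B, hB⟩ : ∃ B : ℝ, B = ε ^ 2 + (1 - h) ^ 2 + h ^ 2 := ⟨_, rfl⟩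
  have hBpos : 0 < B := by rw [hB]; positivity
  have hBD : B = 4 * (1 - h) ^ 2 - 2 * h ^ 2 := by rw [hB, he]; ring
  have hBh : 0 < B * h ^ 2 := by positivity
  obtain ⟨L, hL⟩ : ∃ L : ℝ, L = K / (B * h ^ 2) + 1 := ⟨_, rfl⟩
  have hL1 : 1 ≤ L := by
    rw [hL]
    have : 0 < K / (B * h ^ 2) := by positivity
    linarith
  have hLK : K < L * (B * h ^ 2) := by
    have : L * (B * h ^ 2) = K + B * h ^ 2 := by rw [hL]; field_simp
    linarith
  have hL2 : K < L ^ 2 * (B * h ^ 2) := by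
    have : L * (B * h ^ 2) ≤ L ^ 2 * (B * h ^ 2) := by
      apply mul_le_mul_of_nonneg_right _ hBh.le
      nlinarith
    linarith
  have hx : (B * L - 2 * (1 - h) * L * h, (1 : ℝ)) ∈
      (Set.univ : Set ℝ) ×ˢ Set.Icc (0 : ℝ) 1 := by simp
  have hy : (B * L + 2 * (1 - h) * L * h, 1 - 2 * h) ∈
      (Set.univ : Set ℝ) ×ˢ Set.Icc (0 : ℝ) 1 :=
    ⟨trivial, by linarith, by linarith⟩
  have key := hconv.2 hx hy (show (0 : ℝ) ≤ 1 / 2 by norm_num)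
    (show (0 : ℝ) ≤ 1 / 2 by norm_num) (by norm_num)
  simp only [Prod.smul_mk, Prod.mk_add_mk, smul_eq_mul] at key
  have hneg : h ^ 2 * (K - L ^ 2 * (B * h ^ 2)) < 0 :=
    mul_neg_of_pos_of_neg (by positivity) (by linarith)
  rw [he, hBD] at key
  rw [hBD] at hneg
  -- Twice the convexity inequality states that the second difference is nonnegative.
  linarith
end

section
/- Let X be a real inner product space, A : X → X a continuous linear self-adjoint positive semidefinite map, E : X → ℝ Fréchet differentiable, and 0 < τ ≤ τ₀ such that x ↦ E(x) + (1/(2√(τ₀ τ))) ⟨A x, x⟩ is convex on X. Let N be a positive integer and let x₀, x₁, …, x_N ∈ X and ℓ₁, …, ℓ_N ∈ X satisfy, for each k = 1, …, N, the discrete variational inequality ⟨ E'(x_k) + (1/τ) A(x_k − x_{k−1}) − ℓ_k , x_k − x_{k−1} ⟩ ≤ 0. Then E(x_N) + (1 − √(τ/τ₀)) ∑_{k=1}^{N} (1/τ) ⟨A(x_k − x_{k−1}), x_k − x_{k−1}⟩ ≤ E(x₀) + ∑_{k=1}^{N} ⟨ℓ_k, x_k − x_{k−1}⟩. -/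
/-!
Convexity of `F = E + c⟨A·,·⟩` says that `F` lies above its tangent hyperplanes. Since the quadratic
part equals its second-order Taylor expansion, this becomes
`E u + E' u (v - u) ≤ E v + c ⟨A (v - u), v - u⟩` (`semiconvex_tangent`).
With `u = x k` and `v = x (k - 1)`, the variational inequality bounds the increment
`E (x k) - E (x (k - 1))` by the work of the load minus `(1/τ - c) ⟨A d, d⟩`, where
`d = x k - x (k - 1)`. For `c = 1/(2√(τ₀τ))` one has `c ≤ 1/√(τ₀τ) = √(τ/τ₀) (1/τ)`, so each step
dissipates at least `(1 - √(τ/τ₀)) (1/τ) ⟨A d, d⟩`; the increments of `E` telescope.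
-/

open scoped RealInnerProductSpace

/-- A functional that becomes convex after adding `c⟨A·,·⟩` lies above its tangent hyperplanes up to
the quadratic error `c⟨A(v - u), v - u⟩`. -/
lemma semiconvex_tangent {X : Type*} [NormedAddCommGroup X] [InnerProductSpace ℝ X]
    (A : X →L[ℝ] X) (hA_sym : ∀ x y : X, ⟪A x, y⟫ = ⟪x, A y⟫)
    (E : X → ℝ) (E' : X →L[ℝ] ℝ) (c : ℝ) (u v : X) (hE : HasFDerivAt E E' u)
    (hconv : ConvexOn ℝ (Set.univ : Set X) (fun x => E x + c * ⟪A x, x⟫)) :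
    E u + E' (v - u) ≤ E v + c * ⟪A (v - u), v - u⟫ := by
  obtain ⟨d, rfl⟩ : ∃ d, v = u + d := ⟨v - u, by abel⟩
  rw [add_sub_cancel_left]
  have hexp (t : ℝ) : ⟪A (u + t • d), u + t • d⟫
      = ⟪A u, u⟫ + t * (2 * ⟪A u, d⟫) + t ^ 2 * ⟪A d, d⟫ := by
    simp only [map_add, map_smul, inner_add_left, inner_add_right, real_inner_smul_left,
      real_inner_smul_right]
    rw [hA_sym d u, real_inner_comm (A u) d]
    ring
  have hg : ConvexOn ℝ Set.univ
      (fun t : ℝ => E (u + t • d) + c * ⟪A (u + t • d), u + t • d⟫) := by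
    have h := hconv.comp_affineMap (AffineMap.lineMap (k := ℝ) u (u + d))
    simpa [Function.comp_def, AffineMap.lineMap_apply, add_comm] using h
  simp only [hexp] at hg
  have hline : HasDerivAt (fun t : ℝ => u + t • d) d 0 := by
    simpa using ((hasDerivAt_id (0 : ℝ)).smul_const d).const_add u
  have hE0 : HasDerivAt (fun t : ℝ => E (u + t • d)) (E' d) 0 := by
    have hE1 : HasFDerivAt E E' (u + (0 : ℝ) • d) := by simpa using hE
    exact hE1.comp_hasDerivAt 0 hline
  have hq : HasDerivAt
      (fun t : ℝ => c * (⟪A u, u⟫ + t * (2 * ⟪A u, d⟫) + t ^ 2 * ⟪A d, d⟫))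
      (c * (2 * ⟪A u, d⟫)) 0 := by
    simpa using ((((hasDerivAt_id (0 : ℝ)).mul_const (2 * ⟪A u, d⟫)).const_add ⟪A u, u⟫).add
      ((hasDerivAt_pow 2 (0 : ℝ)).mul_const ⟪A d, d⟫)).const_mul c
  have h := hg.le_slope_of_hasDerivAt (Set.mem_univ 0) (Set.mem_univ 1) one_pos (hE0.add hq)
  simp only [slope_def_field, zero_smul, one_smul, add_zero] at h
  linarith

/-- The quasistatic abstract discrete energy inequality of Proposition 4.1:
if `E + (1/(2√(τ₀τ)))⟨A·,·⟩` is convex and each `x_k` satisfies the discrete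
variational inequality
`⟨E'(x_k) + (1/τ)A(x_k−x_{k−1}) − ℓ_k, x_k−x_{k−1}⟩ ≤ 0`, then
`E(x_N) + (1−√(τ/τ₀)) ∑ (1/τ)⟨A(x_k−x_{k−1}), x_k−x_{k−1}⟩ ≤ E(x₀) + ∑ ⟨ℓ_k, x_k−x_{k−1}⟩`. -/
theorem stmt_11 {X : Type*} [NormedAddCommGroup X] [InnerProductSpace ℝ X]
    (A : X →L[ℝ] X)
    (hA_sym : ∀ x y : X, ⟪A x, y⟫ = ⟪x, A y⟫)
    (hA_psd : ∀ x : X, 0 ≤ ⟪A x, x⟫)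
    (E : X → ℝ) (E' : X → X →L[ℝ] ℝ)
    (hE : ∀ x : X, HasFDerivAt E (E' x) x)
    (τ τ₀ : ℝ) (hτ : 0 < τ) (hττ₀ : τ ≤ τ₀)
    (hconv : ConvexOn ℝ (Set.univ : Set X)
      (fun x => E x + (1/(2 * Real.sqrt (τ₀ * τ))) * ⟪A x, x⟫))
    (N : ℕ) (hN : 0 < N) (x : ℕ → X) (ℓ : ℕ → X)
    (hVI : ∀ k ∈ Finset.Icc 1 N,
      E' (x k) (x k - x (k-1)) + (1/τ) * ⟪A (x k - x (k-1)), x k - x (k-1)⟫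
        - ⟪ℓ k, x k - x (k-1)⟫ ≤ 0) :
    E (x N) + (1 - Real.sqrt (τ/τ₀)) *
        ∑ k ∈ Finset.Icc 1 N, (1/τ) * ⟪A (x k - x (k-1)), x k - x (k-1)⟫
      ≤ E (x 0) + ∑ k ∈ Finset.Icc 1 N, ⟪ℓ k, x k - x (k-1)⟫ := by
  have hτ₀ : 0 < τ₀ := hτ.trans_le hττ₀
  have hc : 1 / (2 * Real.sqrt (τ₀ * τ)) ≤ Real.sqrt (τ / τ₀) * (1 / τ) := by
    have hs : 0 < Real.sqrt τ := Real.sqrt_pos.2 hτ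
    have hs₀ : 0 < Real.sqrt τ₀ := Real.sqrt_pos.2 hτ₀
    have heq : Real.sqrt (τ / τ₀) * (1 / τ) = 1 / Real.sqrt (τ₀ * τ) := by
      rw [Real.sqrt_div hτ.le, Real.sqrt_mul hτ₀.le]
      field_simp
      exact Real.sq_sqrt hτ.le
    have hp : 0 < Real.sqrt (τ₀ * τ) := Real.sqrt_pos.2 (mul_pos hτ₀ hτ)
    rw [heq]
    exact one_div_le_one_div_of_le hp (by linarith)
  have hstep : ∀ k ∈ Finset.Icc 1 N,
      E (x k) + (1 - Real.sqrt (τ / τ₀)) * ((1 / τ) * ⟪A (x k - x (k-1)), x k - x (k-1)⟫)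
        ≤ E (x (k-1)) + ⟪ℓ k, x k - x (k-1)⟫ := by
    intro k hk
    have h := semiconvex_tangent A hA_sym E (E' (x k)) _ (x k) (x (k-1)) (hE _) hconv
    rw [← neg_sub (x k) (x (k-1)), map_neg, map_neg, inner_neg_neg] at h
    have hm := mul_le_mul_of_nonneg_right hc (hA_psd (x k - x (k-1)))
    linarith [hVI k hk]
  clear hVI hN
  induction N with
  | zero => simp
  | succ n ih =>
    have h := hstep (n + 1) (by simp)
    have ih' := ih fun k hk =>
      hstep k (Finset.Icc_subset_Icc_right n.le_succ hk)
    rw [Finset.sum_Icc_succ_top (by omega), Finset.sum_Icc_succ_top (by omega), mul_add]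
    simp only [Nat.add_sub_cancel] at h ⊢
    linarith
end

section
/- Let X be a real inner product space, M : X → X and A : X → X continuous linear self-adjoint positive semidefinite maps, E : X → ℝ Fréchet differentiable, and 0 < τ ≤ τ₀ such that x ↦ E(x) + (1/(2√(τ₀ τ))) ⟨A x, x⟩ is convex on X. Let N be a positive integer and let x₀, …, x_N, v₀, …, v_N ∈ X and ℓ₁, …, ℓ_N ∈ X satisfy, for each k = 1, …, N: (x_k − x_{k−1})/τ = (v_k + v_{k−1})/2 and ⟨ M (v_k − v_{k−1})/τ + E'(x_k) + (1/τ) A(x_k − x_{k−1}) − ℓ_k , x_k − x_{k−1} ⟩ ≤ 0. Then ½ ⟨M v_N, v_N⟩ + E(x_N) + (1 − √(τ/τ₀)) ∑_{k=1}^{N} (1/τ) ⟨A(x_k − x_{k−1}), x_k − x_{k−1}⟩ ≤ ½ ⟨M v₀, v₀⟩ + E(x₀) + ∑_{k=1}^{N} ⟨ℓ_k, x_k − x_{k−1}⟩. -/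
/-!
Testing the discrete momentum balance with the increment `x k - x (k-1)` gives an energy balance
for each step. The midpoint rule turns the inertial term into the exact increment of the kinetic
energy (`kinetic_increment`). Semiconvexity bounds the increment of `E` by the derivative at the
new point plus the small multiple `c = √(τ/τ₀) / (2τ)` of the viscous quadratic form
(`semiconvex_increment`). This error is absorbed by the `√(τ/τ₀)` fraction of the viscous
dissipation that the estimate gives up; half of that fraction would suffice. Summing the
one-step inequalities telescopes.
-/

open scoped RealInnerProductSpace

/-- The gradient inequality for the convex function `E + c ⟪A ·, ·⟫` at `b`, with the quadratic
part moved to the right-hand side: the terms linear in `b - a` cancel exactly because `A` is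
symmetric. -/
theorem semiconvex_increment {X : Type*} [NormedAddCommGroup X] [InnerProductSpace ℝ X]
    (A : X →L[ℝ] X) (hA_sym : ∀ x y : X, ⟪A x, y⟫ = ⟪x, A y⟫)
    (E : X → ℝ) (E' : X →L[ℝ] ℝ) (c : ℝ)
    (hconv : ConvexOn ℝ (Set.univ : Set X) (fun x => E x + c * ⟪A x, x⟫))
    (a b : X) (hE : HasFDerivAt E E' b) :
    E b - E a ≤ E' (b - a) + c * ⟪A (b - a), b - a⟫ := by
  have hquad : ∀ t : ℝ, ⟪A (a + t • (b - a)), a + t • (b - a)⟫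
      = ⟪A a, a⟫ + 2 * t * ⟪A a, b - a⟫ + t ^ 2 * ⟪A (b - a), b - a⟫ := by
    intro t
    have h : ⟪A (b - a), a⟫ = ⟪A a, b - a⟫ := by rw [hA_sym, real_inner_comm]
    simp only [map_add, map_smul, inner_add_left, inner_add_right, real_inner_smul_left,
      real_inner_smul_right, h]
    ring
  have hg : ConvexOn ℝ (Set.univ : Set ℝ) (fun t : ℝ => E (a + t • (b - a))
      + c * (⟪A a, a⟫ + 2 * t * ⟪A a, b - a⟫ + t ^ 2 * ⟪A (b - a), b - a⟫)) := by
    have h := hconv.comp_affineMap (AffineMap.lineMap a b : ℝ →ᵃ[ℝ] X)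
    rw [Set.preimage_univ] at h
    refine h.congr fun t _ => ?_
    have hl : (AffineMap.lineMap a b : ℝ →ᵃ[ℝ] X) t = a + t • (b - a) := by
      rw [AffineMap.lineMap_apply, vsub_eq_sub, vadd_eq_add, add_comm]
    simp only [Function.comp_apply, hl, hquad]
  have hline : HasDerivAt (fun t : ℝ => a + t • (b - a)) (b - a) 1 := by
    simpa using ((hasDerivAt_id (1 : ℝ)).smul_const (b - a)).const_add a
  have hE1 : HasFDerivAt E E' (a + (1 : ℝ) • (b - a)) := by simpa using hE
  have hpoly : HasDerivAt (fun t : ℝ => c * (⟪A a, a⟫ + 2 * t * ⟪A a, b - a⟫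
      + t ^ 2 * ⟪A (b - a), b - a⟫))
      (c * (2 * ⟪A a, b - a⟫ + 2 * ⟪A (b - a), b - a⟫)) 1 := by
    have h1 := (((hasDerivAt_id (1 : ℝ)).const_mul 2).mul_const ⟪A a, b - a⟫).const_add ⟪A a, a⟫
    have h2 := (hasDerivAt_pow 2 (1 : ℝ)).mul_const ⟪A (b - a), b - a⟫
    simpa using (h1.add h2).const_mul c
  have hderiv := (hE1.comp_hasDerivAt (1 : ℝ) hline).add hpoly
  have hslope := hg.slope_le_of_hasDerivAt (Set.mem_univ 0) (Set.mem_univ 1) zero_lt_one hderiv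
  simp only [slope_def_field, one_smul, zero_smul, add_zero, add_sub_cancel] at hslope
  linarith

/-- Under the midpoint rule the inertial term tested with the displacement increment is exactly
the increment of the kinetic energy. -/
theorem kinetic_increment {X : Type*} [NormedAddCommGroup X] [InnerProductSpace ℝ X]
    (M : X →L[ℝ] X) (hM_sym : ∀ x y : X, ⟪M x, y⟫ = ⟪x, M y⟫) (τ : ℝ) (d v w : X)
    (hmid : τ⁻¹ • d = (2 : ℝ)⁻¹ • (v + w)) :
    ⟪τ⁻¹ • M (v - w), d⟫ = (1/2) * ⟪M v, v⟫ - (1/2) * ⟪M w, w⟫ := by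
  rw [real_inner_smul_left, ← real_inner_smul_right, hmid]
  have h : ⟪M w, v⟫ = ⟪M v, w⟫ := by rw [hM_sym, real_inner_comm]
  simp only [map_sub, inner_sub_left, inner_add_right, real_inner_smul_right, h]
  ring

/-- The dynamic abstract form of Proposition 4.1 (discrete energy inequality
(4.4)): with the midpoint rule `(x_k−x_{k−1})/τ = (v_k+v_{k−1})/2` for the
velocity and the implicit rule for the stored energy, the total discrete energy
at the final time plus a `(1−√(τ/τ₀))` fraction of the accumulated viscous
dissipation is bounded by the initial total energy plus the work of the loads. -/
theorem stmt_12 {X : Type*} [NormedAddCommGroup X] [InnerProductSpace ℝ X]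
    (M A : X →L[ℝ] X)
    (hM_sym : ∀ x y : X, ⟪M x, y⟫ = ⟪x, M y⟫)
    (hM_psd : ∀ x : X, 0 ≤ ⟪M x, x⟫)
    (hA_sym : ∀ x y : X, ⟪A x, y⟫ = ⟪x, A y⟫)
    (hA_psd : ∀ x : X, 0 ≤ ⟪A x, x⟫)
    (E : X → ℝ) (E' : X → X →L[ℝ] ℝ)
    (hE : ∀ x : X, HasFDerivAt E (E' x) x)
    (τ τ₀ : ℝ) (hτ : 0 < τ) (hττ₀ : τ ≤ τ₀)
    (hconv : ConvexOn ℝ (Set.univ : Set X)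
      (fun x => E x + (1/(2 * Real.sqrt (τ₀ * τ))) * ⟪A x, x⟫))
    (N : ℕ) (hN : 0 < N) (x v : ℕ → X) (ℓ : ℕ → X)
    (hmid : ∀ k ∈ Finset.Icc 1 N,
      τ⁻¹ • (x k - x (k-1)) = (2:ℝ)⁻¹ • (v k + v (k-1)))
    (hVI : ∀ k ∈ Finset.Icc 1 N,
      ⟪τ⁻¹ • (M (v k - v (k-1))), x k - x (k-1)⟫
        + E' (x k) (x k - x (k-1))
        + (1/τ) * ⟪A (x k - x (k-1)), x k - x (k-1)⟫
        - ⟪ℓ k, x k - x (k-1)⟫ ≤ 0) :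
    (1/2) * ⟪M (v N), v N⟫ + E (x N)
        + (1 - Real.sqrt (τ/τ₀)) *
            ∑ k ∈ Finset.Icc 1 N, (1/τ) * ⟪A (x k - x (k-1)), x k - x (k-1)⟫
      ≤ (1/2) * ⟪M (v 0), v 0⟫ + E (x 0)
        + ∑ k ∈ Finset.Icc 1 N, ⟪ℓ k, x k - x (k-1)⟫ := by
  have hτ₀ : 0 < τ₀ := hτ.trans_le hττ₀
  have hc : 1 / (2 * Real.sqrt (τ₀ * τ)) = Real.sqrt (τ / τ₀) / (2 * τ) := by
    have h1 := Real.sqrt_pos.2 hτ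
    have h2 := Real.sqrt_pos.2 hτ₀
    rw [Real.sqrt_mul hτ₀.le, Real.sqrt_div hτ.le]
    field_simp
    exact (Real.sq_sqrt hτ.le).symm
  rw [hc] at hconv
  have hstep : ∀ k ∈ Finset.Icc 1 N,
      ((1/2) * ⟪M (v k), v k⟫ + E (x k)) - ((1/2) * ⟪M (v (k-1)), v (k-1)⟫ + E (x (k-1)))
        + (1 - Real.sqrt (τ/τ₀)) * ((1/τ) * ⟪A (x k - x (k-1)), x k - x (k-1)⟫)
      ≤ ⟪ℓ k, x k - x (k-1)⟫ := by
    intro k hk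
    have hkin := kinetic_increment M hM_sym τ _ _ _ (hmid k hk)
    have hpot := semiconvex_increment A hA_sym E _ _ hconv (x (k-1)) (x k) (hE (x k))
    have hvi := hVI k hk
    have hnn : 0 ≤ Real.sqrt (τ/τ₀) / (2 * τ) * ⟪A (x k - x (k-1)), x k - x (k-1)⟫ :=
      mul_nonneg (by positivity) (hA_psd _)
    have hhalf : Real.sqrt (τ/τ₀) * ((1/τ) * ⟪A (x k - x (k-1)), x k - x (k-1)⟫)
        = 2 * (Real.sqrt (τ/τ₀) / (2 * τ) * ⟪A (x k - x (k-1)), x k - x (k-1)⟫) := by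
      field_simp
    rw [hkin] at hvi
    linarith
  have hsum := Finset.sum_le_sum hstep
  have htel : ∀ (f : ℕ → ℝ) (n : ℕ), ∑ k ∈ Finset.Icc 1 n, (f k - f (k-1)) = f n - f 0 := by
    intro f n
    induction n with
    | zero => simp
    | succ n ih =>
      rw [Finset.sum_Icc_succ_top (by omega), ih, Nat.add_sub_cancel]
      ring
  rw [Finset.sum_add_distrib, htel (fun k => (1/2) * ⟪M (v k), v k⟫ + E (x k)),
    ← Finset.mul_sum] at hsum
  linarith
end
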